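/- arXiv:2211.14678 — 2 statements merged into one kernel-verified Lean document; each statement's English description precedes it below -/
import Mathlib

section
/- Let k ≥ 1 and σ ∈ S_k. If the equivalence relation ∼_σ has exactly one equivalence class on [k], then d_{G_k}(σ, Id_k) ≤ d_{P_k}(σ, Id_k) ≤ 4. -/
/-- `π` and `τ` are related by a prefix reversal: there is `t ≤ k` such that the first `t`
entries are reversed and the remaining entries agree (0-indexed form of the paper's
1-indexed definition). -/
def PrefixRev (k : ℕ) (π τ : Equiv.Perm (Fin k)) : Prop :=
  ∃ t : ℕ, ∃ ht : t ≤ k,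
    (∀ i : Fin k, t ≤ (i : ℕ) → π i = τ i) ∧
    (∀ i : Fin k, ∀ hi : (i : ℕ) < t, π i = τ ⟨t - 1 - (i : ℕ), by omega⟩)

/-- `π` and `τ` are related by a suffix reversal: there is `t` such that the entries at
positions `< t` agree and the remaining entries are reversed. -/
def SuffixRev (k : ℕ) (π τ : Equiv.Perm (Fin k)) : Prop :=
  ∃ t : ℕ,
    (∀ i : Fin k, (i : ℕ) < t → π i = τ i) ∧
    (∀ i : Fin k, ∀ hi : t ≤ (i : ℕ), π i = τ ⟨k - 1 - (i : ℕ) + t, by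
      have := i.isLt; omega⟩)

/-- The pancake graph `P_k`, whose edges are prefix reversals. -/
def pancakeGraph (k : ℕ) : SimpleGraph (Equiv.Perm (Fin k)) :=
  SimpleGraph.fromRel (PrefixRev k)

/-- The graph `G_k`, whose edges are prefix and suffix reversals. -/
def prefixSuffixGraph (k : ℕ) : SimpleGraph (Equiv.Perm (Fin k)) :=
  SimpleGraph.fromRel (fun π τ => PrefixRev k π τ ∨ SuffixRev k π τ)

/-- The values of `π` at positions `p` and `q` differ by `1`, or are `{1, k}`
(1-indexed), i.e. `{0, k - 1}` in this 0-indexed formalization. -/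
def PiAdjacency (k : ℕ) (π : Equiv.Perm (Fin k)) (p q : Fin k) : Prop :=
  (((π p : ℕ) : ℤ) - ((π q : ℕ) : ℤ)).natAbs = 1 ∨
    ({(π p : ℕ), (π q : ℕ)} : Set ℕ) = {0, k - 1}

/-- Positions `i` and `i + 1` (0-indexed) form a `π`-adjacency. -/
def PosAdjacency (k : ℕ) (π : Equiv.Perm (Fin k)) (i : ℕ) : Prop :=
  ∃ h : i + 1 < k, PiAdjacency k π ⟨i, by omega⟩ ⟨i + 1, h⟩

/-- The equivalence relation `∼_π`: `a ∼_π b` iff every pair of consecutive positions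
between the position of `a` and the position of `b` is a `π`-adjacency. -/
def Sim (k : ℕ) (π : Equiv.Perm (Fin k)) (a b : Fin k) : Prop :=
  ∀ i : ℕ, min ((π.symm a : ℕ)) ((π.symm b : ℕ)) ≤ i →
    i < max ((π.symm a : ℕ)) ((π.symm b : ℕ)) → PosAdjacency k π i

/-- `∼_π` has exactly one equivalence class on `[k]`. -/
def OneClass (k : ℕ) (π : Equiv.Perm (Fin k)) : Prop :=
  ∀ a b : Fin k, Sim k π a b

/-- The pairing `φ(j) = j + o_j`, swapping `2i - 1 ↔ 2i` (1-indexed),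
i.e. `2i ↔ 2i + 1` (0-indexed). -/
def partner (d : ℕ) (j : Fin (2 * d)) : Fin (2 * d) :=
  ⟨if (j : ℕ) % 2 = 0 then (j : ℕ) + 1 else (j : ℕ) - 1, by
    have := j.isLt; split <;> omega⟩

/-- The equivalence relation `≈_π`. -/
def ApproxSim (d : ℕ) (π : Equiv.Perm (Fin (2 * d))) (a b : Fin (2 * d)) : Prop :=
  a = b ∨ (Sim (2 * d) π a b ∧ Sim (2 * d) π a (partner d a) ∧
    Sim (2 * d) π b (partner d b))

/-- `j` is free, i.e. `{j}` is an equivalence class (a singleton) of `≈_π`. -/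
def IsFree (d : ℕ) (π : Equiv.Perm (Fin (2 * d))) (j : Fin (2 * d)) : Prop :=
  ∀ j' : Fin (2 * d), ApproxSim d π j j' → j' = j

/-- The `≈_π`-equivalence class of `j`, as a finite set. -/
noncomputable def classOf (d : ℕ) (π : Equiv.Perm (Fin (2 * d))) (j : Fin (2 * d)) :
    Finset (Fin (2 * d)) :=
  @Finset.filter _ (fun j' => ApproxSim d π j j') (Classical.decPred _) Finset.univ

/-- `S(π)`, the number of singletons of `π`. -/
noncomputable def numSingletons (d : ℕ) (π : Equiv.Perm (Fin (2 * d))) : ℕ :=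
  (@Finset.filter _ (fun j => IsFree d π j) (Classical.decPred _) Finset.univ).card

/-- `B(π)`, the number of blocks (equivalence classes of `≈_π` of size `> 1`) of `π`. -/
noncomputable def numBlocks (d : ℕ) (π : Equiv.Perm (Fin (2 * d))) : ℕ :=
  ((Finset.univ.image (classOf d π)).filter (fun C => 1 < C.card)).card

/-- The potential function `ν(π) = (3/2) S(π) + 2 B(π)`. -/
noncomputable def nu (d : ℕ) (π : Equiv.Perm (Fin (2 * d))) : ℚ :=
  3 / 2 * (numSingletons d π : ℚ) + 2 * (numBlocks d π : ℚ)

/-- The unique element of `[k]` congruent to `j - o_j` modulo `k` (0-indexed form). -/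
def prevVal (d : ℕ) (j : Fin (2 * d)) : Fin (2 * d) :=
  ⟨if (j : ℕ) % 2 = 0 then ((j : ℕ) + 2 * d - 1) % (2 * d) else ((j : ℕ) + 1) % (2 * d), by
    have := j.isLt; split <;> exact Nat.mod_lt _ (by omega)⟩

/-!
Modulo `k` a `σ`-adjacency says that `σ (i + 1) = σ i ± 1`. By injectivity two consecutive steps
cannot cancel, so all steps have the same sign and `σ` is a rotation `i ↦ a + i` or a reflection
`i ↦ a - i` of `ℤ/k`. A rotation lists two increasing blocks `a, …, k - 1` and `0, …, a - 1`;
reversing the first block, then everything, then the new first block sorts it. A reflection becomes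
a rotation after one reversal of everything.
-/

section Steps

variable {G : Type*} [AddGroup G] {n : ℕ} {e : G}

theorem apply_eq_apply_zero_add_nsmul {f : Fin (n + 1) → G}
    (hf : ∀ i : Fin n, f i.succ = f i.castSucc + e) (i : Fin (n + 1)) :
    f i = f 0 + (i : ℕ) • e := by
  induction i using Fin.induction with
  | zero => simp
  | succ i ih => rw [hf, ih, Fin.val_castSucc, Fin.val_succ, succ_nsmul, add_assoc]

theorem apply_succ_eq_add_of_injective {f : Fin (n + 2) → G} (hinj : f.Injective)
    (hstep : ∀ i : Fin (n + 1), f i.succ = f i.castSucc + e ∨ f i.succ = f i.castSucc - e)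
    (hfirst : f 1 = f 0 + e) (i : Fin (n + 1)) : f i.succ = f i.castSucc + e := by
  induction i using Fin.induction with
  | zero => exact hfirst
  | succ i ih =>
    refine (hstep i.succ).resolve_right fun hback => ?_
    have hreturn : f i.succ.succ = f i.castSucc.castSucc := by
      rw [hback, ← Fin.succ_castSucc, ih, add_sub_cancel_right]
    have := Fin.val_eq_of_eq (hinj hreturn)
    simp only [Fin.val_succ, Fin.val_castSucc] at this
    omega

theorem apply_eq_add_nsmul_or_sub_nsmul_of_injective {f : Fin (n + 1) → G} (hinj : f.Injective)
    (hstep : ∀ i : Fin n, f i.succ = f i.castSucc + e ∨ f i.succ = f i.castSucc - e) :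
    (∀ i, f i = f 0 + (i : ℕ) • e) ∨ ∀ i, f i = f 0 - (i : ℕ) • e := by
  cases n with
  | zero => exact .inl (apply_eq_apply_zero_add_nsmul fun i => i.elim0)
  | succ n =>
    refine (hstep 0).imp (fun hup => ?_) fun hdown => ?_
    · exact apply_eq_apply_zero_add_nsmul (apply_succ_eq_add_of_injective hinj hstep hup)
    · have hstep' (i : Fin (n + 1)) :
          f i.succ = f i.castSucc + -e ∨ f i.succ = f i.castSucc - -e := by
        simpa only [← sub_eq_add_neg, sub_neg_eq_add] using (hstep i).symm
      have hdown' : f 1 = f 0 + -e := by simpa [sub_eq_add_neg] using hdown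
      intro i
      rw [sub_eq_add_neg, ← neg_nsmul]
      exact apply_eq_apply_zero_add_nsmul (apply_succ_eq_add_of_injective hinj hstep' hdown') i

end Steps

section OneClass

theorem OneClass.piAdjacency {k : ℕ} {σ : Equiv.Perm (Fin k)} (hσ : OneClass k σ) (i : ℕ)
    (hi : i + 1 < k) : PiAdjacency k σ ⟨i, by omega⟩ ⟨i + 1, hi⟩ :=
  (hσ (σ ⟨i, by omega⟩) (σ ⟨i + 1, hi⟩) i (by simp) (by simp)).2

variable {n : ℕ} {σ : Equiv.Perm (Fin (n + 1))}

theorem PiAdjacency.eq_add_one_or_eq_sub_one {p q : Fin (n + 1)} (h : PiAdjacency (n + 1) σ p q) :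
    σ q = σ p + 1 ∨ σ q = σ p - 1 := by
  rw [eq_sub_iff_add_eq, eq_comm (a := σ q + 1)]
  simp only [PiAdjacency, Set.pair_eq_pair_iff] at h
  simp only [Fin.ext_iff, Fin.val_add_one, Fin.val_last]
  have := (σ p).isLt
  have := (σ q).isLt
  split_ifs <;> omega

theorem OneClass.eq_addLeft_or_eq_subLeft (hσ : OneClass (n + 1) σ) :
    (∃ a, σ = Equiv.addLeft a) ∨ ∃ a, σ = Equiv.subLeft a := by
  have hstep (i : Fin n) : σ i.succ = σ i.castSucc + 1 ∨ σ i.succ = σ i.castSucc - 1 :=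
    (hσ.piAdjacency i (by omega)).eq_add_one_or_eq_sub_one
  have hsmul (i : Fin (n + 1)) : (i : ℕ) • (1 : Fin (n + 1)) = i := by
    open Fin.NatCast in rw [nsmul_one, Fin.cast_val_eq_self]
  refine (apply_eq_add_nsmul_or_sub_nsmul_of_injective σ.injective hstep).imp
    (fun h => ⟨σ 0, Equiv.ext fun i => ?_⟩) fun h => ⟨σ 0, Equiv.ext fun i => ?_⟩
  · rw [h i, hsmul, Equiv.coe_addLeft]
  · rw [h i, hsmul, Equiv.subLeft_apply]

end OneClass

section PrefixReversal

variable {k : ℕ}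

/-- The permutation of positions that reverses the first `t` of them, so that `σ * prefixReversal t`
is obtained from `σ` by a prefix reversal. -/
def prefixReversal (t : ℕ) (ht : t ≤ k) : Equiv.Perm (Fin k) :=
  Function.Involutive.toPerm
    (fun i => ⟨if (i : ℕ) < t then t - 1 - i else i, by split <;> omega⟩)
    fun i => by ext; dsimp only; split_ifs <;> omega

theorem val_prefixReversal (t : ℕ) (ht : t ≤ k) (i : Fin k) :
    (prefixReversal t ht i : ℕ) = if (i : ℕ) < t then t - 1 - i else i := rfl

theorem prefixReversal_self : prefixReversal k le_rfl = Fin.revPerm := by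
  ext i
  rw [val_prefixReversal, if_pos i.isLt, Fin.revPerm_apply, Fin.val_rev]
  omega

theorem prefixRev_mul_prefixReversal (σ : Equiv.Perm (Fin k)) (t : ℕ) (ht : t ≤ k) :
    PrefixRev k (σ * prefixReversal t ht) σ :=
  ⟨t, ht, fun _ hi => congrArg σ (Fin.ext (if_neg hi.not_gt)),
    fun _ hi => congrArg σ (Fin.ext (if_pos hi))⟩

theorem edist_mul_prefixReversal_le_one (σ : Equiv.Perm (Fin k)) (t : ℕ) (ht : t ≤ k) :
    (pancakeGraph k).edist σ (σ * prefixReversal t ht) ≤ 1 := by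
  rw [SimpleGraph.edist_le_one_iff_adj_or_eq, or_iff_not_imp_right]
  exact fun hne => ⟨hne, .inr (prefixRev_mul_prefixReversal σ t ht)⟩

theorem edist_le_edist_mul_prefixReversal_add_one (σ τ : Equiv.Perm (Fin k)) (t : ℕ)
    (ht : t ≤ k) :
    (pancakeGraph k).edist σ τ ≤ (pancakeGraph k).edist (σ * prefixReversal t ht) τ + 1 := by
  rw [add_comm]
  exact SimpleGraph.edist_triangle.trans
    (add_le_add_left (edist_mul_prefixReversal_le_one σ t ht) _)

end PrefixReversal

section Dihedral

variable {n : ℕ}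

theorem addLeft_mul_prefixReversals_eq_one (a : Fin (n + 1)) :
    Equiv.addLeft a * prefixReversal (n + 1 - a) (Nat.sub_le ..) * prefixReversal (n + 1) le_rfl *
      prefixReversal a a.isLt.le = 1 := by
  ext i
  simp only [Equiv.Perm.mul_apply, Equiv.coe_addLeft, Fin.val_add_eq_ite, val_prefixReversal,
    Equiv.Perm.one_apply]
  split_ifs <;> omega

theorem edist_addLeft_one_le_three (a : Fin (n + 1)) :
    (pancakeGraph (n + 1)).edist (Equiv.addLeft a) 1 ≤ 3 := by
  grw [edist_le_edist_mul_prefixReversal_add_one _ 1 (n + 1 - a) (Nat.sub_le ..),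
    edist_le_edist_mul_prefixReversal_add_one _ 1 (n + 1) le_rfl,
    edist_le_edist_mul_prefixReversal_add_one _ 1 a a.isLt.le,
    addLeft_mul_prefixReversals_eq_one, SimpleGraph.edist_self]
  norm_num

theorem subLeft_mul_revPerm (a : Fin (n + 1)) :
    Equiv.subLeft a * Fin.revPerm = Equiv.addLeft (a + 1) := by
  ext1 i
  rw [Equiv.Perm.mul_apply, Fin.revPerm_apply, Equiv.subLeft_apply, Equiv.coe_addLeft,
    ← Fin.last_sub, ← sub_add, sub_eq_add_neg, Fin.neg_last]

theorem edist_subLeft_one_le_four (a : Fin (n + 1)) :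
    (pancakeGraph (n + 1)).edist (Equiv.subLeft a) 1 ≤ 4 :=
  calc (pancakeGraph (n + 1)).edist (Equiv.subLeft a) 1
      ≤ (pancakeGraph (n + 1)).edist (Equiv.addLeft (a + 1)) 1 + 1 := by
        rw [← subLeft_mul_revPerm, ← prefixReversal_self]
        exact edist_le_edist_mul_prefixReversal_add_one ..
    _ ≤ 3 + 1 := by gcongr; exact edist_addLeft_one_le_three (a + 1)
    _ = 4 := by norm_num

theorem OneClass.edist_one_le_four {σ : Equiv.Perm (Fin (n + 1))} (hσ : OneClass (n + 1) σ) :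
    (pancakeGraph (n + 1)).edist σ 1 ≤ 4 := by
  obtain ⟨a, rfl⟩ | ⟨a, rfl⟩ := hσ.eq_addLeft_or_eq_subLeft
  · exact (edist_addLeft_one_le_three a).trans (by norm_num)
  · exact edist_subLeft_one_le_four a

end Dihedral

theorem pancakeGraph_le_prefixSuffixGraph (k : ℕ) : pancakeGraph k ≤ prefixSuffixGraph k :=
  fun _ _ h => ⟨h.1, h.2.imp .inl .inl⟩

/-- If `∼_σ` has exactly one equivalence class on `[k]`, then
`d_{G_k}(σ, Id_k) ≤ d_{P_k}(σ, Id_k) ≤ 4`. -/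
theorem statement_3 (k : ℕ) (hk : 1 ≤ k) (σ : Equiv.Perm (Fin k))
    (hone : OneClass k σ) :
    (prefixSuffixGraph k).dist σ 1 ≤ (pancakeGraph k).dist σ 1 ∧
      (pancakeGraph k).dist σ 1 ≤ 4 := by
  obtain ⟨n, rfl⟩ := Nat.exists_eq_add_of_le' hk
  have hle : (pancakeGraph (n + 1)).edist σ 1 ≤ 4 := hone.edist_one_le_four
  have hreach : (pancakeGraph (n + 1)).Reachable σ 1 :=
    SimpleGraph.reachable_of_edist_ne_top (ne_top_of_le_ne_top (ENat.natCast_ne_top 4) hle)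
  refine ⟨hreach.dist_anti (pancakeGraph_le_prefixSuffixGraph _), ?_⟩
  rw [← hreach.coe_dist_eq_edist] at hle
  exact_mod_cast hle
end

section
/- Let k = 2d with d ≥ 1. For every π ∈ S_k with ν(π) > 2, there exists τ ∈ S_k with 0 < d_{G_k}(π, τ) ≤ ν(π) − ν(τ). -/
/-!
Call a value *matched* if it stands next to its `φ`-partner, and two matched values which are
cyclically consecutive but not partners *linked* if they stand next to each other. Unless `∼_π` has
only one class, `ν(π) = 3d - M/2 - L`, where `M` and `L` count the matched and the linked values:
a block with `m` pairs contains `m - 1` links. Flipping a prefix or a suffix destroys a matched or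
linked pair only if that pair straddles the cut. Let `a` be the first value of `π` and `b` its
cyclic neighbour other than `φ(a)`.

* If `a` is free, a prefix flip brings it next to `φ(a)`, for a gain of `1`.
* If `a` and `b` are matched and `φ(b)` is to the right of `b`, a prefix flip links `a` to `b`, for
  a gain of `2`.
* If `a` and `b` are matched and `φ(b)` is to the left of `b`, some cut between `a` and `b`
  separates no matched or linked pair, as otherwise `a ∼_π b` would leave only one class. Flipping
  the suffix there leads to the previous case.
* If `a` is matched and `b` is free, two prefix flips put `b` at the front followed by `a`, and a
  third one brings them next to `φ(b)`, for a gain of `3`.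
-/

section FinsetCard

variable {α : Type*} {s t : Finset α}

theorem card_add_two_le_of_subset (hst : s ⊆ t) {x y : α} (hxy : x ≠ y)
    (hxs : x ∉ s) (hys : y ∉ s) (hxt : x ∈ t) (hyt : y ∈ t) : s.card + 2 ≤ t.card := by
  classical
  have hpair : {x, y} ⊆ t \ s := by simp [Finset.insert_subset_iff, *]
  have hcard := Finset.card_le_card hpair
  rw [Finset.card_pair hxy] at hcard
  have := Finset.card_sdiff_add_card_eq_card hst
  omega

theorem card_eq_two_mul_card_filter_of_involutive {p : α → Prop} [DecidablePred p] {f : α → α}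
    (hf : f.Involutive) (hfs : ∀ x ∈ s, f x ∈ s) (hfp : ∀ x ∈ s, p (f x) ↔ ¬ p x) :
    s.card = 2 * (s.filter p).card := by
  have hswap : (s.filter fun x ↦ ¬ p x).card = (s.filter p).card := by
    refine Finset.card_nbij' f f ?_ ?_ (fun x _ ↦ hf x) (fun x _ ↦ hf x)
    · intro x hx
      simp only [Finset.coe_filter, Set.mem_ofPred_eq] at hx ⊢
      exact ⟨hfs x hx.1, (hfp x hx.1).2 hx.2⟩
    · intro x hx
      simp only [Finset.coe_filter, Set.mem_ofPred_eq] at hx ⊢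
      exact ⟨hfs x hx.1, fun h ↦ (hfp x hx.1).1 h hx.2⟩
  have := Finset.card_filter_add_card_filter_not (s := s) p
  omega

end FinsetCard

section UnitSteps

variable {A : Type*} [AddCommGroup A] {f : ℕ → A} {g : A} {n : ℕ}

theorem eq_add_nsmul_of_first_step (hfirst : 0 < n → f 1 = f 0 + g)
    (hstep : ∀ i < n, f (i + 1) = f i + g ∨ f (i + 1) = f i - g)
    (hback : ∀ i, i + 2 ≤ n → f (i + 2) ≠ f i) : ∀ i ≤ n, f i = f 0 + i • g := by
  have hconst : ∀ i < n, f (i + 1) = f i + g := by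
    intro i hi
    induction i with
    | zero => exact hfirst hi
    | succ i ih =>
      refine (hstep (i + 1) hi).resolve_right fun hdown ↦ hback i hi ?_
      rw [hdown, ih (by omega), add_sub_cancel_right]
  intro i hi
  induction i with
  | zero => simp
  | succ i ih => rw [hconst i hi, ih (by omega), succ_nsmul, add_assoc]

theorem eq_add_nsmul_or_eq_sub_nsmul
    (hstep : ∀ i < n, f (i + 1) = f i + g ∨ f (i + 1) = f i - g)
    (hback : ∀ i, i + 2 ≤ n → f (i + 2) ≠ f i) :
    (∀ i ≤ n, f i = f 0 + i • g) ∨ ∀ i ≤ n, f i = f 0 - i • g := by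
  by_cases hup : 0 < n → f 1 = f 0 + g
  · exact .inl (eq_add_nsmul_of_first_step hup hstep hback)
  · obtain ⟨hn, hup⟩ := Classical.not_imp.1 hup
    have hdown : f 1 = f 0 + -g := by
      rw [(hstep 0 hn).resolve_left hup, sub_eq_add_neg]
    have hstep_neg : ∀ i < n, f (i + 1) = f i + -g ∨ f (i + 1) = f i - -g := fun i hi ↦ by
      simpa [sub_eq_add_neg] using (hstep i hi).symm
    right
    simpa [sub_eq_add_neg] using eq_add_nsmul_of_first_step (fun _ ↦ hdown) hstep_neg hback

end UnitSteps

/-! ### Positions and flips -/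

section Positions

variable {k : ℕ} {π : Equiv.Perm (Fin k)} {u v x y : Fin k} {t : ℕ}

/-- The position of the value `a` in the one-line notation of `π`, counted from `0`. -/
def posOf (π : Equiv.Perm (Fin k)) (a : Fin k) : ℕ := π.symm a

theorem posOf_lt (π : Equiv.Perm (Fin k)) (a : Fin k) : posOf π a < k := (π.symm a).isLt

theorem posOf_injective (π : Equiv.Perm (Fin k)) : Function.Injective (posOf π) :=
  Fin.val_injective.comp π.symm.injective

theorem exists_posOf_eq (π : Equiv.Perm (Fin k)) {i : ℕ} (hi : i < k) : ∃ a, posOf π a = i :=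
  ⟨π ⟨i, hi⟩, by simp [posOf]⟩

theorem apply_mk_posOf (π : Equiv.Perm (Fin k)) {i : ℕ} (hi : i < k) {a : Fin k}
    (ha : posOf π a = i) : π ⟨i, hi⟩ = a := by
  subst ha
  simp [posOf]

/-- The values `u` and `v` stand next to each other, in either order. -/
def Consecutive (π : Equiv.Perm (Fin k)) (u v : Fin k) : Prop :=
  posOf π u + 1 = posOf π v ∨ posOf π v + 1 = posOf π u

theorem Consecutive.symm (h : Consecutive π u v) : Consecutive π v u := Or.symm h

/-- The result of reversing the entries of `π` at the positions `i` with `s ≤ i < e`. -/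
def intervalFlip (π : Equiv.Perm (Fin k)) (s e : ℕ) (he : e ≤ k) : Equiv.Perm (Fin k) :=
  (Function.Involutive.toPerm
    (fun i : Fin k ↦
      (⟨if s ≤ (i : ℕ) ∧ (i : ℕ) < e then s + e - 1 - i else i, by grind⟩ : Fin k))
    (fun i ↦ Fin.ext (by grind))).trans π

/-- The result of reversing the first `t` entries of `π`. -/
def prefixFlip (π : Equiv.Perm (Fin k)) (t : ℕ) (ht : t ≤ k) : Equiv.Perm (Fin k) :=
  intervalFlip π 0 t ht

/-- The result of reversing all but the first `t` entries of `π`. -/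
def suffixFlip (π : Equiv.Perm (Fin k)) (t : ℕ) : Equiv.Perm (Fin k) :=
  intervalFlip π t k le_rfl

theorem posOf_intervalFlip {s e : ℕ} (he : e ≤ k) (u : Fin k) :
    posOf (intervalFlip π s e he) u =
      if s ≤ posOf π u ∧ posOf π u < e then s + e - 1 - posOf π u else posOf π u := rfl

theorem posOf_prefixFlip (ht : t ≤ k) (u : Fin k) :
    posOf (prefixFlip π t ht) u = if posOf π u < t then t - 1 - posOf π u else posOf π u := by
  simp [prefixFlip, posOf_intervalFlip]

theorem posOf_suffixFlip (u : Fin k) :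
    posOf (suffixFlip π t) u = if posOf π u < t then posOf π u else t + k - 1 - posOf π u := by
  have := posOf_lt π u
  simp only [suffixFlip, posOf_intervalFlip]
  split_ifs <;> omega

theorem intervalFlip_apply_mk {s e : ℕ} (he : e ≤ k) {i : ℕ} (hi : i < k) :
    intervalFlip π s e he ⟨i, hi⟩ =
      π ⟨if s ≤ i ∧ i < e then s + e - 1 - i else i, by split_ifs <;> omega⟩ := rfl

theorem prefixRev_prefixFlip (π : Equiv.Perm (Fin k)) (ht : t ≤ k) :
    PrefixRev k π (prefixFlip π t ht) := by
  refine ⟨t, ht, fun i hi ↦ ?_, fun i hi ↦ ?_⟩ <;> simp only [prefixFlip] <;>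
    rw [intervalFlip_apply_mk] <;> congr 1 <;> ext <;> dsimp only <;> split_ifs <;> omega

theorem suffixRev_suffixFlip (π : Equiv.Perm (Fin k)) (t : ℕ) :
    SuffixRev k π (suffixFlip π t) := by
  refine ⟨t, fun i hi ↦ ?_, fun i hi ↦ ?_⟩ <;> simp only [suffixFlip] <;>
    rw [intervalFlip_apply_mk] <;> congr 1 <;> ext <;> dsimp only <;> split_ifs <;> omega

theorem edist_le_one_of_rev {τ : Equiv.Perm (Fin k)} (h : PrefixRev k π τ ∨ SuffixRev k π τ) :
    (prefixSuffixGraph k).edist π τ ≤ 1 := by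
  rcases eq_or_ne π τ with rfl | hne
  · simp
  · exact (SimpleGraph.edist_eq_one_iff_adj.2 <|
      (SimpleGraph.fromRel_adj _ _ _).2 ⟨hne, .inl h⟩).le

theorem edist_prefixFlip_le_one (π : Equiv.Perm (Fin k)) (ht : t ≤ k) :
    (prefixSuffixGraph k).edist π (prefixFlip π t ht) ≤ 1 :=
  edist_le_one_of_rev (.inl (prefixRev_prefixFlip π ht))

theorem edist_suffixFlip_le_one (π : Equiv.Perm (Fin k)) (t : ℕ) :
    (prefixSuffixGraph k).edist π (suffixFlip π t) ≤ 1 :=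
  edist_le_one_of_rev (.inr (suffixRev_suffixFlip π t))

theorem Consecutive.prefixFlip (h : Consecutive π u v) (ht : t ≤ k)
    (hcut : posOf π u < t ↔ posOf π v < t) : Consecutive (prefixFlip π t ht) u v := by
  unfold Consecutive at *
  simp only [posOf_prefixFlip]
  split_ifs <;> omega

theorem Consecutive.suffixFlip (h : Consecutive π u v)
    (hcut : posOf π u < t ↔ posOf π v < t) : Consecutive (suffixFlip π t) u v := by
  have := posOf_lt π u
  have := posOf_lt π v
  unfold Consecutive at *
  simp only [posOf_suffixFlip]
  split_ifs <;> omega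

theorem consecutive_prefixFlip_posOf (hx : posOf π x = 0) (hxy : x ≠ y) :
    Consecutive (prefixFlip π (posOf π y) (posOf_lt π y).le) x y := by
  have := (posOf_injective π).ne hxy
  unfold Consecutive
  simp only [posOf_prefixFlip]
  split_ifs <;> omega

end Positions

/-! ### Runs of adjacencies -/

section Runs

variable {k : ℕ} {π : Equiv.Perm (Fin k)} {a b u v w : Fin k}

/-- Adjacency of values: the relation `PiAdjacency` imposes on the values at two positions. -/
def CyclicAdj (u v : Fin k) : Prop :=
  (((u : ℕ) : ℤ) - ((v : ℕ) : ℤ)).natAbs = 1 ∨ ({(u : ℕ), (v : ℕ)} : Set ℕ) = {0, k - 1}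

theorem CyclicAdj.symm (h : CyclicAdj u v) : CyclicAdj v u := by
  refine h.imp (fun h ↦ by omega) (fun h ↦ ?_)
  rwa [Set.pair_comm]

theorem CyclicAdj.natCast_eq (h : CyclicAdj u v) :
    ((v : ℕ) : ZMod k) = ((u : ℕ) : ZMod k) + 1 ∨
      ((v : ℕ) : ZMod k) = ((u : ℕ) : ZMod k) - 1 := by
  have hmod : (v : ℕ) ≡ u + 1 [MOD k] ∨ (v : ℕ) + 1 ≡ u [MOD k] := by
    unfold CyclicAdj at h
    rw [Set.pair_eq_pair_iff] at h
    rcases h with h | ⟨hu0, hv⟩ | ⟨hu, hv0⟩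
    · rcases Int.natAbs_eq_iff.1 h with h | h
      · right
        rw [show (v : ℕ) + 1 = u by omega]
      · left
        rw [show (v : ℕ) = u + 1 by omega]
    · right
      rw [hu0, show (v : ℕ) + 1 = k by omega, Nat.modEq_zero_iff_dvd]
    · left
      rw [hv0, show (u : ℕ) + 1 = k by omega]
      exact ((Nat.modEq_zero_iff_dvd).2 dvd_rfl).symm
  simpa [← ZMod.natCast_eq_natCast_iff, eq_sub_iff_add_eq] using hmod

theorem posAdjacency_posOf_iff (h : posOf π u + 1 = posOf π v) :
    PosAdjacency k π (posOf π u) ↔ CyclicAdj u v := by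
  have hlt : posOf π u + 1 < k := h ▸ posOf_lt π v
  have hu : π ⟨posOf π u, by omega⟩ = u := apply_mk_posOf π _ rfl
  have hv : π ⟨posOf π u + 1, hlt⟩ = v := apply_mk_posOf π _ h.symm
  simp only [PosAdjacency, PiAdjacency, hu, hv, hlt, exists_true_left, CyclicAdj]

theorem Sim.refl (π : Equiv.Perm (Fin k)) (u : Fin k) : Sim k π u u := fun i h₁ h₂ ↦ by omega

theorem Sim.symm (h : Sim k π u v) : Sim k π v u :=
  fun i h₁ h₂ ↦ h i (by omega) (by omega)

theorem Sim.trans (huv : Sim k π u v) (hvw : Sim k π v w) : Sim k π u w := by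
  intro i h₁ h₂
  by_cases hi : min (π.symm u : ℕ) (π.symm v) ≤ i ∧ i < max (π.symm u : ℕ) (π.symm v)
  · exact huv i hi.1 hi.2
  · exact hvw i (by omega) (by omega)

theorem Sim.posAdjacency (h : Sim k π a b) {i : ℕ} (hai : posOf π a ≤ i) (hib : i < posOf π b) :
    PosAdjacency k π i :=
  h i (min_le_of_left_le hai) (lt_max_of_lt_right hib)

theorem sim_of_forall_posAdjacency (hab : posOf π a ≤ posOf π b)
    (h : ∀ i, posOf π a ≤ i → i < posOf π b → PosAdjacency k π i) : Sim k π a b := by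
  intro i h₁ h₂
  unfold posOf at *
  exact h i (by omega) (by omega)

theorem Consecutive.sim (h : Consecutive π u v) (hc : CyclicAdj u v) : Sim k π u v := by
  wlog hlt : posOf π u + 1 = posOf π v generalizing u v
  · exact (this h.symm hc.symm (h.resolve_left hlt)).symm
  refine sim_of_forall_posAdjacency (by omega) fun i h₁ h₂ ↦ ?_
  rw [show i = posOf π u by omega]
  exact (posAdjacency_posOf_iff hlt).2 hc

/-- The residue modulo `k` of the value of `π` at position `i`, and `0` if `k ≤ i`. -/
def residueAt (π : Equiv.Perm (Fin k)) (i : ℕ) : ZMod k :=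
  if h : i < k then ((π ⟨i, h⟩ : ℕ) : ZMod k) else 0

theorem residueAt_posOf (π : Equiv.Perm (Fin k)) (u : Fin k) :
    residueAt π (posOf π u) = ((u : ℕ) : ZMod k) := by
  rw [residueAt, dif_pos (posOf_lt π u), apply_mk_posOf π _ rfl]

theorem residueAt_ne {i j : ℕ} (hi : i < k) (hj : j < k) (hij : i ≠ j) :
    residueAt π i ≠ residueAt π j := by
  obtain ⟨u, rfl⟩ := exists_posOf_eq π hi
  obtain ⟨v, rfl⟩ := exists_posOf_eq π hj
  rw [residueAt_posOf, residueAt_posOf]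
  intro h
  rw [ZMod.natCast_eq_natCast_iff', Nat.mod_eq_of_lt u.isLt, Nat.mod_eq_of_lt v.isLt] at h
  exact hij (congrArg (posOf π) (Fin.ext h))

theorem PosAdjacency.residueAt_succ {i : ℕ} (h : PosAdjacency k π i) :
    residueAt π (i + 1) = residueAt π i + 1 ∨ residueAt π (i + 1) = residueAt π i - 1 := by
  have hi : i + 1 < k := h.1
  obtain ⟨u, hu⟩ := exists_posOf_eq π (Nat.lt_of_succ_lt hi)
  obtain ⟨v, hv⟩ := exists_posOf_eq π hi
  rw [← hu] at h hv ⊢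
  rw [← hv, residueAt_posOf, residueAt_posOf]
  exact ((posAdjacency_posOf_iff hv.symm).1 h).natCast_eq

-- Stepping back would repeat a value, so a run of adjacencies is monotone modulo `k`.
theorem Sim.natCast_eq (h : Sim k π a b) (hab : posOf π a ≤ posOf π b) :
    ((b : ℕ) : ZMod k) = (a : ℕ) + ((posOf π b - posOf π a : ℕ) : ZMod k) ∨
      ((b : ℕ) : ZMod k) = (a : ℕ) - ((posOf π b - posOf π a : ℕ) : ZMod k) := by
  have hb := posOf_lt π b
  have hrun := eq_add_nsmul_or_eq_sub_nsmul (f := fun i ↦ residueAt π (posOf π a + i))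
    (g := 1) (n := posOf π b - posOf π a)
    (fun i hi ↦ (h.posAdjacency (i := posOf π a + i) (by omega) (by omega)).residueAt_succ)
    (fun i hi ↦ residueAt_ne (by omega) (by omega) (by omega))
  have hend : posOf π a + (posOf π b - posOf π a) = posOf π b := by omega
  refine hrun.imp (fun hup ↦ ?_) (fun hdown ↦ ?_)
  · simpa [hend, residueAt_posOf] using hup _ le_rfl
  · simpa [hend, residueAt_posOf] using hdown _ le_rfl

theorem Sim.consecutive_or_oneClass (h : Sim k π a b) (hne : a ≠ b) (hc : CyclicAdj a b) :
    Consecutive π a b ∨ OneClass k π := by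
  wlog hle : posOf π a ≤ posOf π b generalizing a b
  · exact (this h.symm hne.symm hc.symm (by omega)).imp_left Consecutive.symm
  have hb := posOf_lt π b
  obtain ⟨n, hn⟩ : ∃ n, posOf π b - posOf π a = n := ⟨_, rfl⟩
  have hrun := h.natCast_eq hle
  rw [hn] at hrun
  have hunit : (n : ZMod k) = 1 ∨ (n : ZMod k) = -1 := by
    rcases hrun with hrun | hrun <;> rcases hc.natCast_eq with hc | hc <;> rw [hc] at hrun
    · exact .inl (by linear_combination -hrun)
    · exact .inr (by linear_combination -hrun)
    · exact .inr (by linear_combination hrun)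
    · exact .inl (by linear_combination hrun)
  rcases hunit with hone | hneg
  · have hmod : n % k = 1 % k := (ZMod.natCast_eq_natCast_iff' n 1 k).1 (by simpa using hone)
    rw [Nat.mod_eq_of_lt (by omega), Nat.mod_eq_of_lt (by omega)] at hmod
    exact .inl (.inl (by omega))
  · have hdvd : k ∣ n + 1 := (ZMod.natCast_eq_zero_iff _ _).1 (by simp [hneg])
    have hle := Nat.le_of_dvd n.succ_pos hdvd
    exact .inr fun u v i _ hi ↦ h.posAdjacency (by omega) (by omega)

theorem oneClass_of_le_two (hk : k ≤ 2) (π : Equiv.Perm (Fin k)) : OneClass k π := by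
  intro a b i _ hlt
  have hi : i + 1 < k := by omega
  have hne : (π ⟨i, by omega⟩ : ℕ) ≠ π ⟨i + 1, hi⟩ :=
    fun h ↦ by simpa using π.injective (Fin.ext h)
  exact ⟨hi, .inl (by omega)⟩

end Runs

/-! ### Matched and linked values -/

section Neighbours

variable {d : ℕ} {u v : Fin (2 * d)}

theorem val_partner (j : Fin (2 * d)) :
    (partner d j : ℕ) = if (j : ℕ) % 2 = 0 then (j : ℕ) + 1 else (j : ℕ) - 1 := rfl

theorem val_prevVal (j : Fin (2 * d)) : (prevVal d j : ℕ) =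
    if (j : ℕ) % 2 = 0 then (if (j : ℕ) = 0 then 2 * d - 1 else j - 1)
    else (if (j : ℕ) + 1 = 2 * d then 0 else j + 1) := by
  simp only [prevVal]
  split_ifs with heven hzero hlast
  · rw [hzero, Nat.mod_eq_of_lt] <;> omega
  · rw [show (j : ℕ) + 2 * d - 1 = (j - 1) + 2 * d by omega, Nat.add_mod_right,
      Nat.mod_eq_of_lt (by omega)]
  · rw [hlast, Nat.mod_self]
  · rw [Nat.mod_eq_of_lt (by omega)]

theorem partner_involutive (d : ℕ) : Function.Involutive (partner d) := by
  intro j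
  ext
  simp only [val_partner]
  split_ifs <;> omega

theorem prevVal_involutive (d : ℕ) : Function.Involutive (prevVal d) := by
  intro j
  ext
  have h₁ := val_prevVal j
  have h₂ := val_prevVal (prevVal d j)
  split_ifs at h₁ h₂ <;> omega

theorem partner_ne (j : Fin (2 * d)) : partner d j ≠ j := by
  rw [Ne, Fin.ext_iff, val_partner]
  split_ifs <;> omega

theorem prevVal_ne (j : Fin (2 * d)) : prevVal d j ≠ j := by
  rw [Ne, Fin.ext_iff, val_prevVal]
  split_ifs <;> omega

theorem partner_ne_prevVal (hd : 2 ≤ d) (j : Fin (2 * d)) : partner d j ≠ prevVal d j := by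
  rw [Ne, Fin.ext_iff, val_partner, val_prevVal]
  split_ifs <;> omega

theorem cyclicAdj_iff : CyclicAdj u v ↔ v = partner d u ∨ v = prevVal d u := by
  rw [CyclicAdj, Set.pair_eq_pair_iff, Fin.ext_iff, Fin.ext_iff, val_partner, val_prevVal]
  split_ifs <;> omega

theorem cyclicAdj_partner (u : Fin (2 * d)) : CyclicAdj u (partner d u) :=
  cyclicAdj_iff.2 (.inl rfl)

theorem cyclicAdj_prevVal (u : Fin (2 * d)) : CyclicAdj u (prevVal d u) :=
  cyclicAdj_iff.2 (.inr rfl)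

end Neighbours

section Matched

variable {d : ℕ} {π : Equiv.Perm (Fin (2 * d))} {j : Fin (2 * d)}

open Classical in
/-- The values which stand next to their partner. Unless `∼_π` has only one class, these are the
values which are not free. -/
noncomputable def matchedValues (π : Equiv.Perm (Fin (2 * d))) : Finset (Fin (2 * d)) :=
  {j | Consecutive π j (partner d j)}

open Classical in
/-- The matched values which stand next to their other cyclic neighbour, if that neighbour is
matched as well: the places where two pairs of partners are joined inside a block. -/
noncomputable def linkedValues (π : Equiv.Perm (Fin (2 * d))) : Finset (Fin (2 * d)) :=
  {j | Consecutive π j (prevVal d j) ∧ j ∈ matchedValues π ∧ prevVal d j ∈ matchedValues π}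

theorem mem_matchedValues : j ∈ matchedValues π ↔ Consecutive π j (partner d j) := by
  simp [matchedValues]

theorem mem_linkedValues : j ∈ linkedValues π ↔ Consecutive π j (prevVal d j) ∧
    j ∈ matchedValues π ∧ prevVal d j ∈ matchedValues π := by
  simp [linkedValues]

theorem linkedValues_subset_matchedValues : linkedValues π ⊆ matchedValues π :=
  fun _ hj ↦ (mem_linkedValues.1 hj).2.1

theorem partner_mem_matchedValues : partner d j ∈ matchedValues π ↔ j ∈ matchedValues π := by
  rw [mem_matchedValues, mem_matchedValues, partner_involutive d j]
  exact ⟨Consecutive.symm, Consecutive.symm⟩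

theorem prevVal_mem_linkedValues : prevVal d j ∈ linkedValues π ↔ j ∈ linkedValues π := by
  rw [mem_linkedValues, mem_linkedValues, prevVal_involutive d j, and_comm (a := j ∈ _)]
  exact and_congr_left' ⟨Consecutive.symm, Consecutive.symm⟩

theorem Sim.partner_of_mem (hj : j ∈ matchedValues π) : Sim (2 * d) π j (partner d j) :=
  (mem_matchedValues.1 hj).sim (cyclicAdj_partner j)

theorem notMem_linkedValues_of_posOf (hd : 2 ≤ d)
    (hj : posOf π j = 0 ∨ posOf π j + 1 = 2 * d) : j ∉ linkedValues π := by
  intro hlinked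
  obtain ⟨hprev, hpartner, -⟩ := mem_linkedValues.1 hlinked
  have hne := (posOf_injective π).ne (partner_ne_prevVal hd j)
  have := posOf_lt π (partner d j)
  have := posOf_lt π (prevVal d j)
  rw [mem_matchedValues] at hpartner
  unfold Consecutive at hprev hpartner
  omega

theorem card_linkedValues_add_two_le (hd : 2 ≤ d) (π : Equiv.Perm (Fin (2 * d))) :
    (linkedValues π).card + 2 ≤ 2 * d := by
  obtain ⟨first, hfirst⟩ := exists_posOf_eq π (show 0 < 2 * d by omega)
  obtain ⟨last, hlast⟩ := exists_posOf_eq π (show 2 * d - 1 < 2 * d by omega)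
  have hne : first ≠ last := by
    rintro rfl
    omega
  simpa using card_add_two_le_of_subset (Finset.subset_univ (linkedValues π)) hne
    (notMem_linkedValues_of_posOf hd (.inl hfirst))
    (notMem_linkedValues_of_posOf hd (.inr (by omega)))
    (Finset.mem_univ _) (Finset.mem_univ _)

end Matched

/-! ### The potential in terms of matched and linked values -/

section Potential

variable {d : ℕ} {π : Equiv.Perm (Fin (2 * d))} {a b j : Fin (2 * d)}

/-- The value of `ν(π)` when `∼_π` has more than one class, and an upper bound for it always. -/
noncomputable def potential (π : Equiv.Perm (Fin (2 * d))) : ℚ :=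
  3 * d - (matchedValues π).card / 2 - (linkedValues π).card

theorem nu_le_two_of_oneClass (h : OneClass (2 * d) π) : nu d π ≤ 2 := by
  have happrox : ∀ a b, ApproxSim d π a b := fun a b ↦ .inr ⟨h _ _, h _ _, h _ _⟩
  have hS : numSingletons d π = 0 := by
    simp only [numSingletons, Finset.card_eq_zero, Finset.filter_eq_empty_iff]
    exact fun j _ hfree ↦ partner_ne j (hfree _ (happrox _ _))
  have hB : numBlocks d π ≤ 1 := by
    refine (Finset.card_filter_le _ _).trans (Finset.card_le_one.2 ?_)
    simp [classOf, happrox]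
  have hB' : (numBlocks d π : ℚ) ≤ 1 := mod_cast hB
  rw [nu, hS]
  push_cast
  linarith

theorem two_le_potential (hd : 2 ≤ d) (π : Equiv.Perm (Fin (2 * d))) : 2 ≤ potential π := by
  have hM : ((matchedValues π).card : ℚ) ≤ 2 * d := by
    exact_mod_cast (matchedValues π).card_le_univ.trans (by simp)
  have hL : ((linkedValues π).card : ℚ) + 2 ≤ 2 * d :=
    mod_cast card_linkedValues_add_two_le hd π
  unfold potential
  linarith

theorem sim_partner_iff (h : ¬ OneClass (2 * d) π) :
    Sim (2 * d) π j (partner d j) ↔ j ∈ matchedValues π :=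
  ⟨fun hs ↦ mem_matchedValues.2 <|
      (hs.consecutive_or_oneClass (partner_ne j).symm (cyclicAdj_partner j)).resolve_right h,
    Sim.partner_of_mem⟩

theorem approxSim_iff (h : ¬ OneClass (2 * d) π) : ApproxSim d π a b ↔
    a = b ∨ Sim (2 * d) π a b ∧ a ∈ matchedValues π ∧ b ∈ matchedValues π := by
  rw [ApproxSim, sim_partner_iff h, sim_partner_iff h]

theorem isFree_iff (h : ¬ OneClass (2 * d) π) : IsFree d π j ↔ j ∉ matchedValues π := by
  constructor
  · intro hfree hj
    exact partner_ne j <| hfree _ <|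
      (approxSim_iff h).2 (.inr ⟨.partner_of_mem hj, hj, partner_mem_matchedValues.2 hj⟩)
  · intro hj j' hj'
    exact (((approxSim_iff h).1 hj').resolve_right fun hs ↦ hj hs.2.1).symm

theorem numSingletons_add_card_matchedValues (h : ¬ OneClass (2 * d) π) :
    numSingletons d π + (matchedValues π).card = 2 * d := by
  have hfree : numSingletons d π = (matchedValues π)ᶜ.card := by
    unfold numSingletons
    congr 1
    ext j
    simp [isFree_iff h]
  rw [hfree, Finset.card_compl_add_card, Fintype.card_fin]

open Classical in
/-- The left elements of the pairs of partners standing next to each other. -/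
noncomputable def pairStarts (π : Equiv.Perm (Fin (2 * d))) : Finset (Fin (2 * d)) :=
  {j ∈ matchedValues π | posOf π j + 1 = posOf π (partner d j)}

open Classical in
/-- The right elements of the links. -/
noncomputable def linkEnds (π : Equiv.Perm (Fin (2 * d))) : Finset (Fin (2 * d)) :=
  {j ∈ linkedValues π | posOf π (prevVal d j) + 1 = posOf π j}

theorem mem_pairStarts : j ∈ pairStarts π ↔ posOf π j + 1 = posOf π (partner d j) := by
  simp only [pairStarts, Finset.mem_filter, mem_matchedValues, and_iff_right_iff_imp]
  exact .inl

theorem pairStarts_subset_matchedValues : pairStarts π ⊆ matchedValues π :=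
  Finset.filter_subset _ _

theorem mem_linkEnds : j ∈ linkEnds π ↔ posOf π (prevVal d j) + 1 = posOf π j ∧
    j ∈ matchedValues π ∧ prevVal d j ∈ matchedValues π := by
  rw [linkEnds, Finset.mem_filter, mem_linkedValues]
  exact ⟨fun h ↦ ⟨h.2, h.1.2⟩, fun h ↦ ⟨⟨.inr h.1, h.2⟩, h.1⟩⟩

theorem linkEnds_subset_pairStarts (hd : 2 ≤ d) (π : Equiv.Perm (Fin (2 * d))) :
    linkEnds π ⊆ pairStarts π := by
  intro j hj
  obtain ⟨hprev, hpartner, -⟩ := mem_linkEnds.1 hj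
  refine mem_pairStarts.2 ((mem_matchedValues.1 hpartner).resolve_right fun hleft ↦ ?_)
  exact partner_ne_prevVal hd j (posOf_injective π (by omega))

theorem card_matchedValues (π : Equiv.Perm (Fin (2 * d))) :
    (matchedValues π).card = 2 * (pairStarts π).card := by
  refine card_eq_two_mul_card_filter_of_involutive (partner_involutive d)
    (fun j hj ↦ partner_mem_matchedValues.2 hj) fun j hj ↦ ?_
  rw [partner_involutive d j]
  have := mem_matchedValues.1 hj
  unfold Consecutive at this
  omega

theorem card_linkedValues (π : Equiv.Perm (Fin (2 * d))) :
    (linkedValues π).card = 2 * (linkEnds π).card := by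
  refine card_eq_two_mul_card_filter_of_involutive (prevVal_involutive d)
    (fun j hj ↦ prevVal_mem_linkedValues.2 hj) fun j hj ↦ ?_
  rw [prevVal_involutive d j]
  have := (mem_linkedValues.1 hj).1
  unfold Consecutive at this
  omega

/-- The leftmost values of the blocks: pairs of partners with no link to their left. -/
noncomputable def blockStarts (π : Equiv.Perm (Fin (2 * d))) : Finset (Fin (2 * d)) :=
  pairStarts π \ linkEnds π

theorem mem_blockStarts : j ∈ blockStarts π ↔ j ∈ pairStarts π ∧ j ∉ linkEnds π :=
  Finset.mem_sdiff

theorem mem_classOf : b ∈ classOf d π a ↔ ApproxSim d π a b := by simp [classOf]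

theorem self_mem_classOf (π : Equiv.Perm (Fin (2 * d))) (a : Fin (2 * d)) : a ∈ classOf d π a :=
  mem_classOf.2 (.inl rfl)

theorem mem_classOf_of_mem (h : ¬ OneClass (2 * d) π) (ha : a ∈ matchedValues π) :
    b ∈ classOf d π a ↔ Sim (2 * d) π a b ∧ b ∈ matchedValues π := by
  rw [mem_classOf, approxSim_iff h]
  constructor
  · rintro (rfl | ⟨hs, -, hb⟩)
    exacts [⟨.refl π _, ha⟩, ⟨hs, hb⟩]
  · exact fun ⟨hs, hb⟩ ↦ .inr ⟨hs, ha, hb⟩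

theorem classOf_eq_classOf_iff (h : ¬ OneClass (2 * d) π) (ha : a ∈ matchedValues π)
    (hb : b ∈ matchedValues π) : classOf d π a = classOf d π b ↔ Sim (2 * d) π a b := by
  constructor
  · intro heq
    exact ((mem_classOf_of_mem h ha).1 (heq ▸ self_mem_classOf π b)).1
  · intro hs
    ext x
    rw [mem_classOf_of_mem h ha, mem_classOf_of_mem h hb]
    exact and_congr_left' ⟨hs.symm.trans, hs.trans⟩

theorem one_lt_card_classOf_iff (h : ¬ OneClass (2 * d) π) :
    1 < (classOf d π j).card ↔ j ∈ matchedValues π := by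
  constructor
  · intro hcard
    obtain ⟨x, hx, hne⟩ := Finset.exists_mem_ne hcard j
    exact (((approxSim_iff h).1 (mem_classOf.1 hx)).resolve_left hne.symm).2.1
  · intro hj
    refine Finset.one_lt_card.2 ⟨j, self_mem_classOf π j, partner d j, ?_, (partner_ne j).symm⟩
    exact (mem_classOf_of_mem h hj).2 ⟨.partner_of_mem hj, partner_mem_matchedValues.2 hj⟩

-- Otherwise the two values to the left of `b` are `φ(prevVal b)` and `prevVal b`, so `b` is linked.
theorem posOf_le_of_sim_of_mem_blockStarts (ha : a ∈ pairStarts π) (hb : b ∈ blockStarts π)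
    (hs : Sim (2 * d) π a b) : posOf π b ≤ posOf π a := by
  by_contra! hlt
  obtain ⟨hb, hb'⟩ := mem_blockStarts.1 hb
  rw [mem_pairStarts] at ha hb
  have hlast := posOf_lt π b
  have hadj : ∀ u v, posOf π a ≤ posOf π u → posOf π u + 1 = posOf π v → posOf π v ≤ posOf π b →
      u = partner d v ∨ u = prevVal d v := fun u v h₁ h₂ h₃ ↦ cyclicAdj_iff.1
    ((posAdjacency_posOf_iff h₂).1 (hs.posAdjacency h₁ (by omega))).symm
  obtain ⟨c, hc⟩ := exists_posOf_eq π (show posOf π b - 1 < 2 * d by omega)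
  have hcb : c = prevVal d b := by
    refine (hadj c b (by omega) (by omega) le_rfl).resolve_left ?_
    rintro rfl
    omega
  have hac : a ≠ c := by
    rintro rfl
    have hpartner : partner d a = b := posOf_injective π (by omega)
    rw [← hpartner, partner_involutive d a] at hb
    omega
  have hac' := (posOf_injective π).ne hac
  obtain ⟨e, he⟩ := exists_posOf_eq π (show posOf π b - 2 < 2 * d by omega)
  have hec : e = partner d c := by
    refine (hadj e c (by omega) (by omega) (by omega)).resolve_right ?_
    rintro rfl
    rw [hcb, prevVal_involutive d b] at he
    omega
  apply hb'
  rw [mem_linkEnds, mem_matchedValues, mem_matchedValues, ← hcb, ← hec]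
  exact ⟨by omega, .inl hb, .inr (by omega)⟩

theorem eq_of_sim_of_mem_blockStarts (ha : a ∈ blockStarts π) (hb : b ∈ blockStarts π)
    (hs : Sim (2 * d) π a b) : a = b :=
  posOf_injective π <| le_antisymm
    (posOf_le_of_sim_of_mem_blockStarts (mem_blockStarts.1 hb).1 ha hs.symm)
    (posOf_le_of_sim_of_mem_blockStarts (mem_blockStarts.1 ha).1 hb hs)

theorem exists_mem_blockStarts_sim (h : ¬ OneClass (2 * d) π) (ha : a ∈ matchedValues π) :
    ∃ b ∈ blockStarts π, Sim (2 * d) π b a := by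
  obtain ⟨b, hb, hmin⟩ := (classOf d π a).exists_min_image (posOf π) ⟨a, self_mem_classOf π a⟩
  obtain ⟨hab, hb⟩ := (mem_classOf_of_mem h ha).1 hb
  have hleft : ∀ c ∈ matchedValues π, Sim (2 * d) π b c → posOf π b ≤ posOf π c :=
    fun c hc hbc ↦ hmin c ((mem_classOf_of_mem h ha).2 ⟨hab.trans hbc, hc⟩)
  refine ⟨b, mem_blockStarts.2 ⟨mem_pairStarts.2 ?_, fun hlink ↦ ?_⟩, hab.symm⟩
  · refine (mem_matchedValues.1 hb).resolve_right fun hpartner ↦ ?_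
    have := hleft _ (partner_mem_matchedValues.2 hb) (.partner_of_mem hb)
    omega
  · obtain ⟨hpos, -, hprev⟩ := mem_linkEnds.1 hlink
    have := hleft _ hprev (Consecutive.sim (.inr hpos) (cyclicAdj_prevVal b))
    omega

theorem numBlocks_eq_card_blockStarts (h : ¬ OneClass (2 * d) π) :
    numBlocks d π = (blockStarts π).card := by
  have hsub : ∀ {j}, j ∈ blockStarts π → j ∈ matchedValues π :=
    fun hj ↦ pairStarts_subset_matchedValues (mem_blockStarts.1 hj).1
  refine (Finset.card_bij (fun j _ ↦ classOf d π j) ?_ ?_ ?_).symm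
  · intro j hj
    exact Finset.mem_filter.2 ⟨Finset.mem_image_of_mem _ (Finset.mem_univ j),
      (one_lt_card_classOf_iff h).2 (hsub hj)⟩
  · intro a ha b hb heq
    exact eq_of_sim_of_mem_blockStarts ha hb
      ((classOf_eq_classOf_iff h (hsub ha) (hsub hb)).1 heq)
  · intro C hC
    obtain ⟨hC, hcard⟩ := Finset.mem_filter.1 hC
    obtain ⟨a, -, rfl⟩ := Finset.mem_image.1 hC
    have ha := (one_lt_card_classOf_iff h).1 hcard
    obtain ⟨b, hb, hs⟩ := exists_mem_blockStarts_sim h ha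
    exact ⟨b, hb, (classOf_eq_classOf_iff h (hsub hb) ha).2 hs⟩

theorem nu_eq_potential (hd : 2 ≤ d) (h : ¬ OneClass (2 * d) π) : nu d π = potential π := by
  have hB : (numBlocks d π : ℚ) + (linkEnds π).card = (pairStarts π).card := by
    rw [numBlocks_eq_card_blockStarts h]
    exact_mod_cast Finset.card_sdiff_add_card_eq_card (linkEnds_subset_pairStarts hd π)
  have hS : (numSingletons d π : ℚ) + (matchedValues π).card = 2 * d :=
    mod_cast numSingletons_add_card_matchedValues h
  have hM : ((matchedValues π).card : ℚ) = 2 * (pairStarts π).card :=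
    mod_cast card_matchedValues π
  have hL : ((linkedValues π).card : ℚ) = 2 * (linkEnds π).card :=
    mod_cast card_linkedValues π
  unfold nu potential
  linarith

theorem nu_le_potential (hd : 2 ≤ d) (π : Equiv.Perm (Fin (2 * d))) : nu d π ≤ potential π := by
  by_cases h : OneClass (2 * d) π
  · exact (nu_le_two_of_oneClass h).trans (two_le_potential hd π)
  · exact (nu_eq_potential hd h).le

end Potential

/-! ### Bonds and cuts -/

section Bonds

variable {d : ℕ} {π ρ τ : Equiv.Perm (Fin (2 * d))} {a b u v : Fin (2 * d)} {t : ℕ}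

/-- The pairs of neighbouring values which contribute to the potential. -/
def Bond (π : Equiv.Perm (Fin (2 * d))) (u v : Fin (2 * d)) : Prop :=
  (v = partner d u ∧ u ∈ matchedValues π) ∨ (v = prevVal d u ∧ u ∈ linkedValues π)

theorem Bond.symm (h : Bond π u v) : Bond π v u := by
  rcases h with ⟨rfl, h⟩ | ⟨rfl, h⟩
  · exact .inl ⟨(partner_involutive d u).symm, partner_mem_matchedValues.2 h⟩
  · exact .inr ⟨(prevVal_involutive d u).symm, prevVal_mem_linkedValues.2 h⟩

theorem Bond.consecutive (h : Bond π u v) : Consecutive π u v := by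
  rcases h with ⟨rfl, h⟩ | ⟨rfl, h⟩
  exacts [mem_matchedValues.1 h, (mem_linkedValues.1 h).1]

theorem Bond.cyclicAdj (h : Bond π u v) : CyclicAdj u v :=
  cyclicAdj_iff.2 (h.imp And.left And.left)

theorem Bond.left_mem (h : Bond π u v) : u ∈ matchedValues π :=
  h.elim And.right fun h ↦ linkedValues_subset_matchedValues h.2

/-- Every bond of `π` is a bond of `τ`. -/
structure BondsLE (π τ : Equiv.Perm (Fin (2 * d))) : Prop where
  matched : matchedValues π ⊆ matchedValues τ
  linked : linkedValues π ⊆ linkedValues τ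

theorem BondsLE.trans (h₁ : BondsLE π ρ) (h₂ : BondsLE ρ τ) : BondsLE π τ :=
  ⟨h₁.matched.trans h₂.matched, h₁.linked.trans h₂.linked⟩

theorem bondsLE_of_consecutive (h : ∀ u v, Bond π u v → Consecutive τ u v) : BondsLE π τ := by
  have hM : matchedValues π ⊆ matchedValues τ :=
    fun u hu ↦ mem_matchedValues.2 (h _ _ (.inl ⟨rfl, hu⟩))
  refine ⟨hM, fun u hu ↦ ?_⟩
  obtain ⟨-, hself, hprev⟩ := mem_linkedValues.1 hu
  exact mem_linkedValues.2 ⟨h _ _ (.inr ⟨rfl, hu⟩), hM hself, hM hprev⟩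

theorem BondsLE.card_matchedValues_add_two_le (h : BondsLE π τ) (hπ : a ∉ matchedValues π)
    (hτ : a ∈ matchedValues τ) : (matchedValues π).card + 2 ≤ (matchedValues τ).card :=
  card_add_two_le_of_subset h.matched (partner_ne a).symm hπ
    (mt partner_mem_matchedValues.1 hπ) hτ (partner_mem_matchedValues.2 hτ)

theorem BondsLE.card_linkedValues_add_two_le (h : BondsLE π τ) (hπ : a ∉ linkedValues π)
    (hτ : a ∈ linkedValues τ) : (linkedValues π).card + 2 ≤ (linkedValues τ).card :=
  card_add_two_le_of_subset h.linked (prevVal_ne a).symm hπ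
    (mt prevVal_mem_linkedValues.1 hπ) hτ (prevVal_mem_linkedValues.2 hτ)

theorem BondsLE.potential_le (h : BondsLE π τ) : potential τ ≤ potential π := by
  have hM : ((matchedValues π).card : ℚ) ≤ (matchedValues τ).card :=
    mod_cast Finset.card_le_card h.matched
  have hL : ((linkedValues π).card : ℚ) ≤ (linkedValues τ).card :=
    mod_cast Finset.card_le_card h.linked
  unfold potential
  linarith

theorem BondsLE.potential_add_one_le (h : BondsLE π τ) (hπ : a ∉ matchedValues π)
    (hτ : a ∈ matchedValues τ) : potential τ + 1 ≤ potential π := by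
  have hM : ((matchedValues π).card : ℚ) + 2 ≤ (matchedValues τ).card :=
    mod_cast h.card_matchedValues_add_two_le hπ hτ
  have hL : ((linkedValues π).card : ℚ) ≤ (linkedValues τ).card :=
    mod_cast Finset.card_le_card h.linked
  unfold potential
  linarith

theorem BondsLE.potential_add_two_le (h : BondsLE π τ) (hπ : a ∉ linkedValues π)
    (hτ : a ∈ linkedValues τ) : potential τ + 2 ≤ potential π := by
  have hM : ((matchedValues π).card : ℚ) ≤ (matchedValues τ).card :=
    mod_cast Finset.card_le_card h.matched
  have hL : ((linkedValues π).card : ℚ) + 2 ≤ (linkedValues τ).card :=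
    mod_cast h.card_linkedValues_add_two_le hπ hτ
  unfold potential
  linarith

theorem BondsLE.potential_add_three_le (h : BondsLE π τ) (hπa : a ∉ linkedValues π)
    (hτa : a ∈ linkedValues τ) (hπb : b ∉ matchedValues π) (hτb : b ∈ matchedValues τ) :
    potential τ + 3 ≤ potential π := by
  have hM : ((matchedValues π).card : ℚ) + 2 ≤ (matchedValues τ).card :=
    mod_cast h.card_matchedValues_add_two_le hπb hτb
  have hL : ((linkedValues π).card : ℚ) + 2 ≤ (linkedValues τ).card :=
    mod_cast h.card_linkedValues_add_two_le hπa hτa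
  unfold potential
  linarith

/-- No bond joins the positions `t - 1` and `t`, so reversing the first `t` entries or all the
others destroys no bond. -/
def UnbondedCut (π : Equiv.Perm (Fin (2 * d))) (t : ℕ) : Prop :=
  ∀ u v, Bond π u v → posOf π u + 1 = posOf π v → posOf π v ≠ t

theorem UnbondedCut.posOf_lt_iff (ht : UnbondedCut π t) (h : Bond π u v) :
    posOf π u < t ↔ posOf π v < t := by
  have huv := ht u v h
  have hvu := ht v u h.symm
  have hcons := h.consecutive
  unfold Consecutive at hcons
  omega

theorem UnbondedCut.bondsLE_prefixFlip (h : UnbondedCut π t) (ht : t ≤ 2 * d) :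
    BondsLE π (prefixFlip π t ht) :=
  bondsLE_of_consecutive fun _ _ huv ↦ huv.consecutive.prefixFlip ht (h.posOf_lt_iff huv)

theorem UnbondedCut.bondsLE_suffixFlip (h : UnbondedCut π t) : BondsLE π (suffixFlip π t) :=
  bondsLE_of_consecutive fun _ _ huv ↦ huv.consecutive.suffixFlip (h.posOf_lt_iff huv)

theorem unbondedCut_posOf_of_notMem_linkedValues (hb : b ∉ linkedValues π)
    (hright : posOf π b + 1 = posOf π (partner d b)) : UnbondedCut π (posOf π b) := by
  intro u v huv hpos heq
  obtain rfl := posOf_injective π heq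
  rcases huv.symm with ⟨rfl, -⟩ | ⟨-, hv⟩
  · omega
  · exact hb hv

theorem unbondedCut_posOf_of_notMem_matchedValues (hb : b ∉ matchedValues π) :
    UnbondedCut π (posOf π b) := by
  intro u v huv _ heq
  obtain rfl := posOf_injective π heq
  exact hb huv.symm.left_mem

theorem unbondedCut_posOf_add_one_of_notMem_matchedValues (hb : b ∉ matchedValues π) :
    UnbondedCut π (posOf π b + 1) := by
  intro u v huv hpos heq
  obtain rfl : u = b := posOf_injective π (by omega)
  exact hb huv.left_mem

theorem sim_of_forall_not_unbondedCut (hab : posOf π a ≤ posOf π b)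
    (h : ∀ t, posOf π a < t → t ≤ posOf π b → ¬ UnbondedCut π t) : Sim (2 * d) π a b := by
  refine sim_of_forall_posAdjacency hab fun i h₁ h₂ ↦ ?_
  have hcut := h (i + 1) (by omega) (by omega)
  simp only [UnbondedCut, not_forall, not_not] at hcut
  obtain ⟨u, v, huv, hpos, hv⟩ := hcut
  rw [show i = posOf π u by omega]
  exact (posAdjacency_posOf_iff hpos).2 huv.cyclicAdj

end Bonds

/-! ### Lowering the potential -/

section Descent

variable {d : ℕ} {π : Equiv.Perm (Fin (2 * d))} {a : Fin (2 * d)}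

/-- Some positive number `n` of moves leads from `π` to a permutation whose potential is smaller by
at least `n`. -/
def HasDescent (π : Equiv.Perm (Fin (2 * d))) : Prop :=
  ∃ (τ : Equiv.Perm (Fin (2 * d))) (n : ℕ), 0 < n ∧
    (prefixSuffixGraph (2 * d)).edist π τ ≤ n ∧ potential τ + n ≤ potential π

theorem hasDescent_of_first_notMem_matchedValues (ha₀ : posOf π a = 0)
    (ha : a ∉ matchedValues π) : HasDescent π := by
  have hcut : UnbondedCut π (posOf π (partner d a)) :=
    unbondedCut_posOf_of_notMem_matchedValues (mt partner_mem_matchedValues.1 ha)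
  have hnew := consecutive_prefixFlip_posOf ha₀ (partner_ne a).symm
  refine ⟨prefixFlip π (posOf π (partner d a)) (posOf_lt π _).le, 1, one_pos,
    edist_prefixFlip_le_one π _, ?_⟩
  exact_mod_cast (hcut.bondsLE_prefixFlip _).potential_add_one_le ha (mem_matchedValues.2 hnew)

theorem potential_prefixFlip_add_two_le (hd : 2 ≤ d) (ha₀ : posOf π a = 0)
    (ha : a ∈ matchedValues π)
    (hright : posOf π (prevVal d a) + 1 = posOf π (partner d (prevVal d a))) :
    potential (prefixFlip π (posOf π (prevVal d a)) (posOf_lt π _).le) + 2 ≤ potential π := by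
  have ha_link : a ∉ linkedValues π := notMem_linkedValues_of_posOf hd (.inl ha₀)
  have hle := (unbondedCut_posOf_of_notMem_linkedValues
    (mt prevVal_mem_linkedValues.1 ha_link) hright).bondsLE_prefixFlip (posOf_lt π _).le
  have hb : prevVal d a ∈ matchedValues π := mem_matchedValues.2 (.inl hright)
  refine hle.potential_add_two_le ha_link (mem_linkedValues.2 ⟨?_, hle.matched ha, hle.matched hb⟩)
  exact consecutive_prefixFlip_posOf ha₀ (prevVal_ne a).symm

theorem hasDescent_of_partner_right (hd : 2 ≤ d) (ha₀ : posOf π a = 0) (ha : a ∈ matchedValues π)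
    (hright : posOf π (prevVal d a) + 1 = posOf π (partner d (prevVal d a))) : HasDescent π := by
  have := potential_prefixFlip_add_two_le hd ha₀ ha hright
  refine ⟨prefixFlip π (posOf π (prevVal d a)) (posOf_lt π _).le, 1, one_pos,
    edist_prefixFlip_le_one π _, ?_⟩
  push_cast
  linarith

theorem exists_unbondedCut_le_posOf_prevVal (hd : 2 ≤ d) (h : ¬ OneClass (2 * d) π)
    (ha₀ : posOf π a = 0) (ha : a ∈ matchedValues π) :
    ∃ t, 0 < t ∧ t ≤ posOf π (prevVal d a) ∧ UnbondedCut π t := by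
  by_contra! hcon
  have hs : Sim (2 * d) π a (prevVal d a) :=
    sim_of_forall_not_unbondedCut (by omega) fun t ht ↦ hcon t (by omega)
  have hcons : Consecutive π a (prevVal d a) :=
    (hs.consecutive_or_oneClass (prevVal_ne a).symm (cyclicAdj_prevVal a)).resolve_right h
  rw [mem_matchedValues] at ha
  unfold Consecutive at ha hcons
  exact partner_ne_prevVal hd a (posOf_injective π (by omega))

theorem hasDescent_of_partner_left (hd : 2 ≤ d) (h : ¬ OneClass (2 * d) π)
    (ha₀ : posOf π a = 0) (ha : a ∈ matchedValues π)
    (hleft : posOf π (partner d (prevVal d a)) + 1 = posOf π (prevVal d a)) : HasDescent π := by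
  obtain ⟨t, ht₀, htb, hcut⟩ := exists_unbondedCut_le_posOf_prevVal hd h ha₀ ha
  have hb : prevVal d a ∈ matchedValues π := mem_matchedValues.2 (.inr hleft)
  have hsame := hcut.posOf_lt_iff (.inl ⟨rfl, hb⟩)
  have hle := hcut.bondsLE_suffixFlip
  have ha₀' : posOf (suffixFlip π t) a = 0 := by
    rw [posOf_suffixFlip, if_pos (by omega), ha₀]
  have hright : posOf (suffixFlip π t) (prevVal d a) + 1 =
      posOf (suffixFlip π t) (partner d (prevVal d a)) := by
    have := posOf_lt π (prevVal d a)
    rw [posOf_suffixFlip, posOf_suffixFlip, if_neg (by omega), if_neg (by omega)]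
    omega
  have hgain := potential_prefixFlip_add_two_le hd ha₀' (hle.matched ha) hright
  refine ⟨prefixFlip (suffixFlip π t) (posOf (suffixFlip π t) (prevVal d a)) (posOf_lt _ _).le,
    2, two_pos, SimpleGraph.edist_triangle.trans (add_le_add
      (edist_suffixFlip_le_one π t) (edist_prefixFlip_le_one _ _)), ?_⟩
  exact_mod_cast hgain.trans hle.potential_le

-- Flipping the prefix before `b` and then the prefix ending in `b` moves `b` to the front.
theorem exists_move_to_front {b : Fin (2 * d)} (ha₀ : posOf π a = 0) (hab : a ≠ b)
    (hb : b ∉ matchedValues π) (hpartner : partner d b ≠ a) :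
    ∃ ρ : Equiv.Perm (Fin (2 * d)), (prefixSuffixGraph (2 * d)).edist π ρ ≤ 2 ∧
      BondsLE π ρ ∧ posOf ρ b = 0 ∧ posOf ρ a = 1 := by
  have hb₀ : posOf π b ≠ 0 := ha₀ ▸ (posOf_injective π).ne hab.symm
  have hc₀ : posOf π (partner d b) ≠ 0 := ha₀ ▸ (posOf_injective π).ne hpartner
  set σ := prefixFlip π (posOf π b) (posOf_lt π b).le
  have hσpos : ∀ u, posOf σ u =
      if posOf π u < posOf π b then posOf π b - 1 - posOf π u else posOf π u := posOf_prefixFlip _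
  have hσa : posOf σ a + 1 = posOf π b := by
    rw [hσpos, if_pos (by omega)]
    omega
  have hσb : posOf σ b = posOf π b := by rw [hσpos, if_neg (lt_irrefl _)]
  have hbσ : b ∉ matchedValues σ := by
    rw [mem_matchedValues] at hb ⊢
    unfold Consecutive at *
    rw [hσb, hσpos]
    split_ifs <;> omega
  refine ⟨prefixFlip σ (posOf σ b + 1) (posOf_lt σ b), ?_, ?_, ?_, ?_⟩
  · exact SimpleGraph.edist_triangle.trans
      (add_le_add (edist_prefixFlip_le_one π _) (edist_prefixFlip_le_one σ _))
  · exact ((unbondedCut_posOf_of_notMem_matchedValues hb).bondsLE_prefixFlip _).trans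
      ((unbondedCut_posOf_add_one_of_notMem_matchedValues hbσ).bondsLE_prefixFlip _)
  all_goals
    rw [posOf_prefixFlip, if_pos (by omega)]
    omega

theorem hasDescent_of_prevVal_notMem_matchedValues (hd : 2 ≤ d) (ha₀ : posOf π a = 0)
    (ha : a ∈ matchedValues π) (hb : prevVal d a ∉ matchedValues π) : HasDescent π := by
  obtain ⟨b, hab⟩ : ∃ b, prevVal d a = b := ⟨_, rfl⟩
  have hne : b ≠ a := hab ▸ prevVal_ne a
  rw [hab] at hb
  have hpartner : partner d b ≠ a :=
    fun heq ↦ hb (partner_mem_matchedValues.1 (by rwa [heq]))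
  obtain ⟨ρ, hdist, hπρ, hρb, hρa⟩ := exists_move_to_front ha₀ hne.symm hb hpartner
  have hρc₁ := hρa ▸ (posOf_injective ρ).ne hpartner
  have hbρ : b ∉ matchedValues ρ := by
    rw [mem_matchedValues]
    unfold Consecutive
    omega
  set τ := prefixFlip ρ (posOf ρ (partner d b)) (posOf_lt ρ _).le
  have hle : BondsLE π τ := hπρ.trans <| (unbondedCut_posOf_of_notMem_matchedValues
    (mt partner_mem_matchedValues.1 hbρ)).bondsLE_prefixFlip _
  have hbτ : b ∈ matchedValues τ :=
    mem_matchedValues.2 (consecutive_prefixFlip_posOf hρb (partner_ne b).symm)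
  have haτ : a ∈ linkedValues τ := by
    rw [mem_linkedValues, hab]
    exact ⟨Consecutive.prefixFlip (.inr (by omega)) _ (by omega), hle.matched ha, hbτ⟩
  refine ⟨τ, 3, three_pos, SimpleGraph.edist_triangle.trans (add_le_add hdist
    (edist_prefixFlip_le_one ρ _)), ?_⟩
  exact_mod_cast hle.potential_add_three_le
    (notMem_linkedValues_of_posOf hd (.inl ha₀)) haτ hb hbτ

theorem hasDescent_of_not_oneClass (hd : 2 ≤ d) (h : ¬ OneClass (2 * d) π) : HasDescent π := by
  obtain ⟨a, ha₀⟩ := exists_posOf_eq π (show 0 < 2 * d by omega)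
  by_cases ha : a ∈ matchedValues π
  swap
  · exact hasDescent_of_first_notMem_matchedValues ha₀ ha
  by_cases hb : prevVal d a ∈ matchedValues π
  swap
  · exact hasDescent_of_prevVal_notMem_matchedValues hd ha₀ ha hb
  rcases mem_matchedValues.1 hb with hright | hleft
  · exact hasDescent_of_partner_right hd ha₀ ha hright
  · exact hasDescent_of_partner_left hd h ha₀ ha hleft

end Descent

/-- Let `k = 2d` with `d ≥ 1`. For every `π ∈ S_k` with `ν(π) > 2`,
there exists `τ ∈ S_k` with `0 < d_{G_k}(π, τ) ≤ ν(π) - ν(τ)`. -/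
theorem statement_5 (d : ℕ) (hd : 1 ≤ d) (π : Equiv.Perm (Fin (2 * d)))
    (hν : 2 < nu d π) :
    ∃ τ : Equiv.Perm (Fin (2 * d)),
      0 < (prefixSuffixGraph (2 * d)).dist π τ ∧
      ((prefixSuffixGraph (2 * d)).dist π τ : ℚ) ≤ nu d π - nu d τ := by
  have hclass : ¬ OneClass (2 * d) π := fun h ↦ (nu_le_two_of_oneClass h).not_gt hν
  have hd₂ : 2 ≤ d := by
    by_contra hlt
    exact hclass (oneClass_of_le_two (by omega) π)
  obtain ⟨τ, n, hn, hedist, hdrop⟩ := hasDescent_of_not_oneClass hd₂ hclass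
  have hne : π ≠ τ := by
    rintro rfl
    have : (0 : ℚ) < n := mod_cast hn
    linarith
  have hreach : (prefixSuffixGraph (2 * d)).Reachable π τ :=
    SimpleGraph.edist_ne_top_iff_reachable.1 (ne_top_of_le_ne_top (ENat.natCast_ne_top n) hedist)
  refine ⟨τ, hreach.pos_dist_of_ne hne, ?_⟩
  calc ((prefixSuffixGraph (2 * d)).dist π τ : ℚ)
      ≤ n := mod_cast ENat.toNat_le_of_le_natCast hedist
    _ ≤ potential π - potential τ := by linarith
    _ ≤ nu d π - nu d τ := by linarith [nu_eq_potential hd₂ hclass, nu_le_potential hd₂ τ]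
end
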